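/- arXiv:math/0010292 — 2 statements merged into one kernel-verified Lean document; each statement's English description precedes it below -/
import Mathlib

section
/- Let X and Y be realcompact completely regular Hausdorff topological spaces, let E and F be normed spaces over 𝕂, let T : C(X,E) → C(Y,F) be a biseparating map, and let h : Y → X be a homeomorphism with the property that for every f ∈ C(X,E) and every y ∈ Y, if f vanishes identically on some neighborhood of h(y) then Tf vanishes identically on some neighborhood of y. Then for every f ∈ C(X,E) and every y ∈ Y, f(h(y)) = 0 implies (Tf)(y) = 0. -/
open Filter Topology

/-- A topological space is realcompact if it admits a closed topological embedding
into a product `ℝ^ι` of copies of `ℝ`. -/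
def Realcompact (X : Type) [TopologicalSpace X] : Prop :=
  ∃ (ι : Type) (e : X → ι → ℝ), IsClosedEmbedding e

/-- A map between spaces of continuous vector-valued functions is separating if it maps
pairs of functions with disjoint cozero sets to pairs of functions with disjoint cozero sets. -/
def SeparatingC {X Y E F : Type} [TopologicalSpace X] [TopologicalSpace Y]
    [NormedAddCommGroup E] [NormedAddCommGroup F] (T : C(X, E) → C(Y, F)) : Prop :=
  ∀ f g : C(X, E), (∀ x, ‖f x‖ * ‖g x‖ = 0) → ∀ y, ‖T f y‖ * ‖T g y‖ = 0

/-!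
The map `T` is local along `h`: the value `T f y` depends only on the germ of `f` at `h y`.
Let `f (h y₀) = 0`, with `f` not vanishing identically near `h y₀`. Multiply `f` by a continuous
staircase approximating `-log ‖f‖`; although unbounded, it grows slowly enough for the product `g`
to be continuous. Near a point `h y` where the staircase is locally constant, equal to an integer
`n`, one has `g = n • f`, so `T g y = n • T f y` by locality and additivity. Letting `y → y₀` makes
`n → ∞` while `T g y` stays convergent, hence `T f y₀ = lim n⁻¹ • T g y = 0`. Since a continuous
staircase is not locally constant everywhere, it is used together with its shift by `1 / 2`.
-/

section Staircase

/-- The continuous staircase whose value is `n` on the plateau `[n, n + 3/4]` and which climbs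
linearly to the next integer on `[n + 3/4, n + 1]`. The plateaus are longer than `1 / 2` so that
their interiors, together with those of the shift by `1 / 2`, cover the line. -/
noncomputable def staircase (s : ℝ) : ℝ := ⌊s⌋ + max 0 (4 * Int.fract s - 3)

lemma continuous_staircase : Continuous staircase := by
  have hperiodic : Continuous ((fun t : ℝ ↦ t - max 0 (4 * t - 3)) ∘ Int.fract) :=
    ContinuousOn.comp_fract'' (by fun_prop) (by norm_num)
  have hsub : staircase = fun s ↦ s - (Int.fract s - max 0 (4 * Int.fract s - 3)) := by
    funext s
    simp only [staircase, ← Int.self_sub_floor]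
    ring
  exact hsub ▸ continuous_id.sub hperiodic

lemma abs_staircase_sub_self_le (s : ℝ) : |staircase s - s| ≤ 1 := by
  have hfract : staircase s - s = max 0 (4 * Int.fract s - 3) - Int.fract s := by
    simp only [staircase, ← Int.self_sub_floor]
    ring
  have h₀ := Int.fract_nonneg s
  have h₁ := Int.fract_lt_one s
  rw [hfract, abs_le]
  constructor
  · linarith [le_max_left 0 (4 * Int.fract s - 3)]
  · linarith [max_le (by linarith : (0 : ℝ) ≤ 1) (by linarith : 4 * Int.fract s - 3 ≤ 1)]

lemma abs_staircase_add_le (s a : ℝ) : |staircase (s + a)| ≤ |s| + (|a| + 1) :=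
  calc |staircase (s + a)| = |s + a + (staircase (s + a) - (s + a))| := by ring_nf
    _ ≤ |s| + |a| + |staircase (s + a) - (s + a)| := abs_add_three _ _ _
    _ ≤ |s| + |a| + 1 := by gcongr; exact abs_staircase_sub_self_le _
    _ = |s| + (|a| + 1) := add_assoc _ _ _

lemma eventually_staircase_eq_floor {s : ℝ} (hs : Int.fract s ∈ Set.Ioo 0 (3 / 4)) :
    ∀ᶠ t in 𝓝 s, staircase t = ⌊s⌋ := by
  have hmem : s ∈ Set.Ioo (⌊s⌋ : ℝ) (⌊s⌋ + 3 / 4) := by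
    rw [← Int.self_sub_floor] at hs
    exact ⟨by linarith [hs.1], by linarith [hs.2]⟩
  filter_upwards [Ioo_mem_nhds hmem.1 hmem.2] with t ht
  have hfloor : ⌊t⌋ = ⌊s⌋ := Int.floor_eq_iff.mpr ⟨ht.1.le, by linarith [ht.2]⟩
  rw [staircase, ← Int.self_sub_floor, hfloor, max_eq_left (by linarith [ht.2]), add_zero]

lemma fract_mem_Ioo_or_fract_add_half_mem_Ioo (s : ℝ) :
    Int.fract s ∈ Set.Ioo (0 : ℝ) (3 / 4) ∨ Int.fract (s + 1 / 2) ∈ Set.Ioo (0 : ℝ) (3 / 4) := by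
  have h₀ := Int.fract_nonneg s
  have h₁ := Int.fract_lt_one s
  have hfloor := Int.self_sub_floor s
  rw [or_iff_not_imp_left, Set.mem_Ioo, not_and_or, not_lt, not_lt]
  rintro (hle | hge)
  · have hshift : Int.fract (s + 1 / 2) = 1 / 2 :=
      Int.fract_eq_iff.mpr ⟨by norm_num, by norm_num, ⌊s⌋, by linarith⟩
    norm_num [hshift]
  · have hshift : Int.fract (s + 1 / 2) = Int.fract s - 1 / 2 :=
      Int.fract_eq_iff.mpr
        ⟨by linarith, by linarith, ⌊s⌋ + 1, by push_cast; linarith⟩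
    rw [hshift]
    constructor <;> linarith

end Staircase

section NegLogNorm

variable {E : Type*} [NormedAddCommGroup E]

lemma tendsto_floor_neg_log_norm_add_atTop (a : ℝ) :
    Tendsto (fun v : E ↦ ⌊-Real.log ‖v‖ + a⌋) (𝓝[≠] 0) atTop :=
  tendsto_floor_atTop.comp <| tendsto_atTop_add_const_right _ a <|
    tendsto_neg_atBot_atTop.comp <| Real.tendsto_log_nhdsGT_zero.comp tendsto_norm_nhdsNE_zero

variable [NormedSpace ℝ E]

lemma continuous_comp_neg_log_norm_smul {φ : ℝ → ℝ} {C : ℝ} (hφ : Continuous φ)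
    (hbound : ∀ s, |φ s| ≤ |s| + C) : Continuous fun v : E ↦ φ (-Real.log ‖v‖) • v := by
  refine continuous_iff_continuousAt.mpr fun v ↦ ?_
  obtain rfl | hv := eq_or_ne v 0
  · have hle (w : E) : ‖φ (-Real.log ‖w‖) • w‖ ≤ |‖w‖ * Real.log ‖w‖| + C * ‖w‖ :=
      calc ‖φ (-Real.log ‖w‖) • w‖ = |φ (-Real.log ‖w‖)| * ‖w‖ := norm_smul _ _
        _ ≤ (|-Real.log ‖w‖| + C) * ‖w‖ := by gcongr; exact hbound _
        _ = |‖w‖ * Real.log ‖w‖| + C * ‖w‖ := by rw [abs_neg, abs_mul, abs_norm]; ring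
    have hcont : Continuous fun w : E ↦ |‖w‖ * Real.log ‖w‖| + C * ‖w‖ :=
      (Real.continuous_mul_log.comp continuous_norm).abs.add (by fun_prop)
    rw [ContinuousAt, smul_zero]
    exact squeeze_zero_norm hle (by simpa using hcont.tendsto 0)
  · have hlog : ContinuousAt (fun w : E ↦ -Real.log ‖w‖) v :=
      (continuous_norm.continuousAt.log (norm_ne_zero_iff.mpr hv)).neg
    exact (ContinuousAt.comp (g := φ) hφ.continuousAt hlog).smul continuousAt_id

/-- The map `v ↦ n(v) • v` of a normed space to itself, where `n(v)` is the value at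
`-log ‖v‖ + a` of the staircase. It is locally an integer multiple of the identity
at the nonzero vectors where `-log ‖v‖ + a` lies inside a plateau; the junk value `log 0 = 0` is
harmless, as it multiplies `v = 0`. -/
noncomputable def staircaseSMul (a : ℝ) : C(E, E) where
  toFun v := staircase (-Real.log ‖v‖ + a) • v
  continuous_toFun := continuous_comp_neg_log_norm_smul (φ := fun s ↦ staircase (s + a))
    (continuous_staircase.comp (continuous_add_const a)) (abs_staircase_add_le · a)

lemma eventually_staircaseSMul_eq_floor_zsmul {a : ℝ} {v : E} (hv : v ≠ 0)
    (hplateau : Int.fract (-Real.log ‖v‖ + a) ∈ Set.Ioo 0 (3 / 4)) :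
    ∀ᶠ w in 𝓝 v, staircaseSMul a w = ⌊-Real.log ‖v‖ + a⌋ • w := by
  have hcont : ContinuousAt (fun w : E ↦ -Real.log ‖w‖ + a) v :=
    (continuous_norm.continuousAt.log (norm_ne_zero_iff.mpr hv)).neg.add_const a
  filter_upwards [hcont.eventually (eventually_staircase_eq_floor hplateau)] with w hw
  rw [← Int.cast_smul_eq_zsmul ℝ, ← hw]
  rfl

end NegLogNorm

section Local

variable {X Y E F : Type*} [TopologicalSpace X] [TopologicalSpace Y] [NormedAddCommGroup E]
  [AddCommGroup F] [TopologicalSpace F] [IsTopologicalAddGroup F]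
  {T : C(X, E) →+ C(Y, F)} {h : Y → X}

lemma map_apply_congr_of_local
    (hloc : ∀ (f : C(X, E)) (y : Y), (∀ᶠ x in 𝓝 (h y), f x = 0) → T f y = 0)
    {f g : C(X, E)} {y : Y} (hfg : ∀ᶠ x in 𝓝 (h y), f x = g x) : T f y = T g y := by
  rw [← sub_eq_zero, ← ContinuousMap.sub_apply, ← map_sub]
  exact hloc _ y (hfg.mono fun x hx ↦ sub_eq_zero.mpr hx)

variable [NormedSpace ℝ E]

lemma map_staircaseSMul_comp_apply_of_local
    (hloc : ∀ (f : C(X, E)) (y : Y), (∀ᶠ x in 𝓝 (h y), f x = 0) → T f y = 0)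
    {f : C(X, E)} {a : ℝ} {y : Y} (hfy : f (h y) ≠ 0)
    (hplateau : Int.fract (-Real.log ‖f (h y)‖ + a) ∈ Set.Ioo 0 (3 / 4)) :
    T ((staircaseSMul a).comp f) y = ⌊-Real.log ‖f (h y)‖ + a⌋ • T f y := by
  set n := ⌊-Real.log ‖f (h y)‖ + a⌋
  have hgerm : ∀ᶠ x in 𝓝 (h y), (staircaseSMul a).comp f x = (n • f) x :=
    f.continuous.continuousAt.eventually (eventually_staircaseSMul_eq_floor_zsmul hfy hplateau)
  rw [map_apply_congr_of_local hloc hgerm, map_zsmul, ContinuousMap.smul_apply]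

variable [Module ℝ F] [ContinuousSMul ℝ F] [T2Space F]

lemma map_apply_eq_zero_of_frequently_mem_plateau
    (hloc : ∀ (f : C(X, E)) (y : Y), (∀ᶠ x in 𝓝 (h y), f x = 0) → T f y = 0)
    {f : C(X, E)} {a : ℝ} {y₀ : Y} (hcont : ContinuousAt h y₀) (hf : f (h y₀) = 0)
    (hfreq : ∃ᶠ y in 𝓝 y₀, f (h y) ≠ 0 ∧
      Int.fract (-Real.log ‖f (h y)‖ + a) ∈ Set.Ioo (0 : ℝ) (3 / 4)) :
    T f y₀ = 0 := by
  set S := {y | f (h y) ≠ 0 ∧ Int.fract (-Real.log ‖f (h y)‖ + a) ∈ Set.Ioo (0 : ℝ) (3 / 4)}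
  have : (𝓝[S] y₀).NeBot := frequently_mem_iff_neBot.mp hfreq
  let n : Y → ℤ := fun y ↦ ⌊-Real.log ‖f (h y)‖ + a⌋
  have hfh : Tendsto (fun y ↦ f (h y)) (𝓝[S] y₀) (𝓝[≠] 0) := by
    refine tendsto_nhdsWithin_iff.mpr ⟨?_, eventually_mem_nhdsWithin.mono fun y hy ↦ hy.1⟩
    rw [← hf]
    exact (f.continuous.continuousAt.comp hcont).tendsto.mono_left nhdsWithin_le_nhds
  have hn : Tendsto n (𝓝[S] y₀) atTop := (tendsto_floor_neg_log_norm_add_atTop a).comp hfh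
  have hinv : Tendsto (fun y ↦ (n y : ℝ)⁻¹) (𝓝[S] y₀) (𝓝 0) :=
    tendsto_inv_atTop_zero.comp (tendsto_intCast_atTop_atTop.comp hn)
  have hlim : Tendsto (fun y ↦ (n y : ℝ)⁻¹ • T ((staircaseSMul a).comp f) y) (𝓝[S] y₀) (𝓝 0) := by
    simpa only [zero_smul] using
      hinv.smul (T ((staircaseSMul a).comp f)).continuous.continuousWithinAt.tendsto
  have heq : ∀ᶠ y in 𝓝[S] y₀, (n y : ℝ)⁻¹ • T ((staircaseSMul a).comp f) y = T f y := by
    filter_upwards [eventually_mem_nhdsWithin, hn.eventually_ne_atTop 0] with y hy hny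
    rw [map_staircaseSMul_comp_apply_of_local hloc hy.1 hy.2, ← Int.cast_smul_eq_zsmul ℝ,
      inv_smul_smul₀ (Int.cast_ne_zero.mpr hny)]
  exact tendsto_nhds_unique (T f).continuous.continuousWithinAt.tendsto (hlim.congr' heq)

end Local

theorem stmt2_general {X Y E F : Type*} [TopologicalSpace X] [TopologicalSpace Y]
    [NormedAddCommGroup E] [NormedSpace ℝ E]
    [AddCommGroup F] [TopologicalSpace F] [IsTopologicalAddGroup F]
    [Module ℝ F] [ContinuousSMul ℝ F] [T2Space F]
    (T : C(X, E) →+ C(Y, F)) {h : Y → X} (hcont : Continuous h) (hopen : IsOpenMap h)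
    (hloc : ∀ (f : C(X, E)) (y : Y), (∀ᶠ x in 𝓝 (h y), f x = 0) → T f y = 0)
    (f : C(X, E)) (y : Y) (hf : f (h y) = 0) : T f y = 0 := by
  by_cases hzero : ∀ᶠ y' in 𝓝 y, f (h y') = 0
  · exact hloc f y (hopen.nhds_le y hzero)
  · have hcover : ∃ᶠ y' in 𝓝 y,
        (f (h y') ≠ 0 ∧ Int.fract (-Real.log ‖f (h y')‖ + 0) ∈ Set.Ioo (0 : ℝ) (3 / 4)) ∨
        (f (h y') ≠ 0 ∧ Int.fract (-Real.log ‖f (h y')‖ + 1 / 2) ∈ Set.Ioo (0 : ℝ) (3 / 4)) := by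
      refine (not_eventually.mp hzero).mono fun y' hy' ↦ ?_
      rw [← and_or_left, add_zero]
      exact ⟨hy', fract_mem_Ioo_or_fract_add_half_mem_Ioo _⟩
    obtain hfreq | hfreq := frequently_or_distrib.mp hcover <;>
      exact map_apply_eq_zero_of_frequently_mem_plateau hloc hcont.continuousAt hf hfreq

theorem stmt2 {𝕂 X Y E F : Type} [RCLike 𝕂]
    [TopologicalSpace X] [CompletelyRegularSpace X] [T2Space X]
    [TopologicalSpace Y] [CompletelyRegularSpace Y] [T2Space Y]
    [NormedAddCommGroup E] [NormedSpace 𝕂 E]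
    [NormedAddCommGroup F] [NormedSpace 𝕂 F]
    (hX : Realcompact X) (hY : Realcompact Y)
    (T : C(X, E) ≃+ C(Y, F)) (hT : SeparatingC ⇑T) (hT' : SeparatingC ⇑T.symm)
    (h : Y ≃ₜ X)
    (hloc : ∀ (f : C(X, E)) (y : Y),
      (∀ᶠ x in 𝓝 (h y), f x = 0) → ∀ᶠ y' in 𝓝 y, T f y' = 0) :
    ∀ (f : C(X, E)) (y : Y), f (h y) = 0 → T f y = 0 := by
  let := NormedSpace.restrictScalars ℝ 𝕂 E
  let := NormedSpace.restrictScalars ℝ 𝕂 F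
  exact stmt2_general (T : C(X, E) →+ C(Y, F)) h.continuous h.isOpenMap
    fun f y hf ↦ (hloc f y hf).self_of_nhds
end

section
/- Let X and Y be realcompact completely regular Hausdorff topological spaces, let E and F be infinite-dimensional normed spaces over 𝕂, and let T : C_b(X,E) → C_b(Y,F) be a 𝕂-linear biseparating map. Then there exist a homeomorphism h : Y → X and, for each y ∈ Y, a bijective (not necessarily continuous) 𝕂-linear map J_y : E → F such that (Tf)(y) = J_y(f(h(y))) for every f ∈ C_b(X,E) and every y ∈ Y. -/
open Filter Topology BoundedContinuousFunction

/-- A map between spaces of bounded continuous vector-valued functions is separating if it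
maps pairs of functions with disjoint cozero sets to pairs of functions with disjoint
cozero sets. -/
def SeparatingB {X Y E F : Type} [TopologicalSpace X] [TopologicalSpace Y]
    [NormedAddCommGroup E] [NormedAddCommGroup F] (T : (X →ᵇ E) → (Y →ᵇ F)) : Prop :=
  ∀ f g : X →ᵇ E, (∀ x, ‖f x‖ * ‖g x‖ = 0) → ∀ y, ‖T f y‖ * ‖T g y‖ = 0

/-
Every bounded continuous function has a support in the Stone–Čech compactification, and a
biseparating map `T` transports these supports by a homeomorphism `H : βY ≃ βX`. The norm of `f`
extends to a continuous function on `βX`. If it vanishes at `H q` then that of `T f` vanishes at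
`q`: otherwise large multiples of `f`, cut off to disjoint shells around `H q` on which they are
still small, glue to a bounded function whose image under `T` is unbounded. Hence wherever `H y`
is a point `x` of `X`, the value `T f y` depends only on `f x`.

It remains to see that `H` maps `Y` onto `X`. If `H y ∉ X`, realcompactness provides a continuous
function `u` on `βX` vanishing at `H y` and positive on `X`. The same gluing along the level shells
of `u`, for `T⁻¹`, shows that `e ↦ T e y`, on constant functions `e`, is bounded below. As no point
of `X` has `u = 0`, one may now even glue constants `e n` that do not tend to zero, taken bounded
and separated by infinite-dimensionality. The image of the glued function at `y` would then be close
to `T (e n) y` for infinitely many `n`, although these vectors are separated.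
-/

open Set

section StoneCechFunctions

variable {X E : Type*} [TopologicalSpace X] [NormedAddCommGroup E]

/-- The restriction to `X` of a continuous function on `βX`, as a multiplier acting on bounded
functions `X → E`. -/
noncomputable def restrictUnit (χ : C(StoneCech X, ℝ)) : X →ᵇ ℝ :=
  (mkOfCompact χ).compContinuous ⟨stoneCechUnit, continuous_stoneCechUnit⟩

@[simp]
theorem restrictUnit_smul_apply [NormedSpace ℝ E] (χ : C(StoneCech X, ℝ)) (f : X →ᵇ E) (x : X) :
    (restrictUnit χ • f) x = χ (stoneCechUnit x) • f x :=
  rfl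

/-- The continuous extension to `βX` of a bounded continuous real function on `X`. -/
noncomputable def boundedExtension (g : X →ᵇ ℝ) : C(StoneCech X, ℝ) where
  toFun := Subtype.val ∘ stoneCechExtend
    (g := fun x => (⟨g x, abs_le.1 (g.norm_coe_le_norm x)⟩ : Icc (-‖g‖) ‖g‖))
    (g.continuous.subtype_mk _)
  continuous_toFun := continuous_subtype_val.comp (continuous_stoneCechExtend _)

@[simp]
theorem boundedExtension_unit (g : X →ᵇ ℝ) (x : X) :
    boundedExtension g (stoneCechUnit x) = g x := by
  simp [boundedExtension]

/-- The continuous extension to `βX` of the function `x ↦ ‖f x‖`. -/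
noncomputable def normExtension (f : X →ᵇ E) : C(StoneCech X, ℝ) :=
  boundedExtension f.normComp

@[simp]
theorem normExtension_unit (f : X →ᵇ E) (x : X) : normExtension f (stoneCechUnit x) = ‖f x‖ :=
  boundedExtension_unit _ x

theorem le_of_forall_stoneCechUnit_le {a b : C(StoneCech X, ℝ)}
    (h : ∀ x, a (stoneCechUnit x) ≤ b (stoneCechUnit x)) (p : StoneCech X) : a p ≤ b p :=
  denseRange_stoneCechUnit.induction_on p (isClosed_le a.continuous b.continuous) h

theorem eq_of_forall_stoneCechUnit_eq {a b : C(StoneCech X, ℝ)}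
    (h : ∀ x, a (stoneCechUnit x) = b (stoneCechUnit x)) (p : StoneCech X) : a p = b p :=
  denseRange_stoneCechUnit.induction_on p (isClosed_eq a.continuous b.continuous) h

variable [NormedSpace ℝ E]

/-- The value at `p ∈ βX` of the extension of `x ↦ ‖f x‖`, as a seminorm in `f`: it measures the
size of `f` at `p`, where `f` itself need not have a value. -/
noncomputable def normAt (p : StoneCech X) : Seminorm ℝ (X →ᵇ E) :=
  Seminorm.of (fun f => normExtension f p)
    (fun f g => le_of_forall_stoneCechUnit_le (b := normExtension f + normExtension g)
      (fun x => by simpa using norm_add_le (f x) (g x)) p)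
    (fun c f => eq_of_forall_stoneCechUnit_eq (b := ‖c‖ • normExtension f)
      (fun x => by simp [norm_smul]) p)

@[simp]
theorem normAt_unit (x : X) (f : X →ᵇ E) : normAt (stoneCechUnit x) f = ‖f x‖ :=
  normExtension_unit f x

@[fun_prop]
theorem continuous_normAt (f : X →ᵇ E) : Continuous fun p => normAt p f :=
  (normExtension f).continuous

theorem normAt_le_norm (p : StoneCech X) (f : X →ᵇ E) : normAt p f ≤ ‖f‖ :=
  le_of_forall_stoneCechUnit_le (a := normExtension f) (b := .const _ ‖f‖)
    (fun x => by simpa using f.norm_coe_le_norm x) p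

@[simp]
theorem normAt_const (p : StoneCech X) (e : E) : normAt p (const X e) = ‖e‖ :=
  eq_of_forall_stoneCechUnit_eq (a := normExtension (const X e)) (b := .const _ ‖e‖) (by simp) p

theorem normAt_restrictUnit_smul (p : StoneCech X) (χ : C(StoneCech X, ℝ)) (f : X →ᵇ E) :
    normAt p (restrictUnit χ • f) = |χ p| * normAt p f :=
  eq_of_forall_stoneCechUnit_eq (a := normExtension (restrictUnit χ • f))
    (b := |χ| * normExtension f) (fun x => by simp [norm_smul]) p

theorem normAt_eq_of_normAt_sub_eq_zero {p : StoneCech X} {f g : X →ᵇ E}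
    (h : normAt p (f - g) = 0) : normAt p f = normAt p g :=
  sub_eq_zero.1 <| abs_nonpos_iff.1 <| (abs_sub_map_le_sub (normAt p) f g).trans_eq h

end StoneCechFunctions

section Support

variable {X E : Type*} [TopologicalSpace X] [NormedAddCommGroup E]

/-- The support of `f` in `βX`, the closure in `βX` of the cozero set of `f`. -/
def stoneCechSupport (f : X →ᵇ E) : Set (StoneCech X) :=
  closure (stoneCechUnit '' Function.support f)

theorem isClosed_stoneCechSupport (f : X →ᵇ E) : IsClosed (stoneCechSupport f) :=
  isClosed_closure

theorem stoneCechUnit_mem_stoneCechSupport {f : X →ᵇ E} {x : X} (hx : f x ≠ 0) :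
    stoneCechUnit x ∈ stoneCechSupport f :=
  subset_closure (mem_image_of_mem _ hx)

theorem notMem_stoneCechSupport_iff {f : X →ᵇ E} {p : StoneCech X} :
    p ∉ stoneCechSupport f ↔ ∀ᶠ p' in 𝓝 p, ∀ x, stoneCechUnit x = p' → f x = 0 := by
  simp only [stoneCechSupport, mem_closure_iff_frequently, not_frequently, mem_image,
    Function.mem_support, not_exists, not_and']
  simp only [not_not]

theorem notMem_stoneCechSupport_add {f g : X →ᵇ E} {p : StoneCech X}
    (hf : p ∉ stoneCechSupport f) (hg : p ∉ stoneCechSupport g) : p ∉ stoneCechSupport (f + g) := by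
  rw [notMem_stoneCechSupport_iff] at hf hg ⊢
  filter_upwards [hf, hg] with p' hf hg x hx
  rw [BoundedContinuousFunction.add_apply, hf x hx, hg x hx, add_zero]

theorem stoneCechSupport_subset_closure (f : X →ᵇ E) :
    stoneCechSupport f ⊆ closure {p | 0 < normExtension f p} :=
  closure_mono <| by
    rintro _ ⟨x, hx, rfl⟩
    simpa using hx

variable [NormedSpace ℝ E]

theorem normAt_eq_of_mem_stoneCechSupport {f g : X →ᵇ E} {r : ℝ} {p : StoneCech X}
    (hp : p ∈ stoneCechSupport f) (h : ∀ x, f x ≠ 0 → ‖g x‖ = r) : normAt p g = r := by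
  refine closure_minimal ?_ (isClosed_eq (continuous_normAt g) continuous_const) hp
  rintro _ ⟨x, hx, rfl⟩
  exact (normAt_unit x g).trans (h x hx)

theorem normAt_eq_zero_of_notMem_stoneCechSupport {f : X →ᵇ E} {p : StoneCech X}
    (hp : p ∉ stoneCechSupport f) : normAt p f = 0 := by
  have hp' : p ∈ closure (stoneCechUnit '' {x | f x = 0}) := by
    have hrange := denseRange_stoneCechUnit p
    rw [← image_univ, ← union_compl_self (Function.support f), image_union, closure_union] at hrange
    simpa [Function.support, compl_ofPred] using hrange.resolve_left hp
  refine closure_minimal ?_ (isClosed_eq (continuous_normAt f) continuous_const) hp'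
  rintro _ ⟨x, hx, rfl⟩
  exact (normAt_unit x f).trans (norm_eq_zero.2 hx)

theorem notMem_stoneCechSupport_restrictUnit_smul {χ : C(StoneCech X, ℝ)} {p : StoneCech X}
    (h : ∀ᶠ p' in 𝓝 p, χ p' = 0) (f : X →ᵇ E) : p ∉ stoneCechSupport (restrictUnit χ • f) := by
  rw [notMem_stoneCechSupport_iff]
  filter_upwards [h] with p' hp' x hx
  rw [restrictUnit_smul_apply, hx, hp', zero_smul]

theorem mem_stoneCechSupport_restrictUnit_smul_const {χ : C(StoneCech X, ℝ)} {p : StoneCech X}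
    (h : χ p ≠ 0) {e : E} (he : e ≠ 0) : p ∈ stoneCechSupport (restrictUnit χ • const X e) := by
  by_contra hp
  have := normAt_eq_zero_of_notMem_stoneCechSupport hp
  simp [normAt_restrictUnit_smul, h, he] at this

theorem exists_eventually_eq_zero_eqOn_one {K : Type*} [TopologicalSpace K] [NormalSpace K]
    [T1Space K] {C : Set K} (hC : IsClosed C) {p : K} (hp : p ∉ C) :
    ∃ χ : C(K, ℝ), (∀ᶠ p' in 𝓝 p, χ p' = 0) ∧ EqOn χ 1 C := by
  obtain ⟨D, hDp, hD, hDC⟩ := exists_mem_nhds_isClosed_subset (hC.isOpen_compl.mem_nhds hp)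
  obtain ⟨χ, h0, h1, -⟩ :=
    exists_continuous_zero_one_of_isClosed hD hC (disjoint_left.2 fun _ h => hDC h)
  exact ⟨χ, eventually_of_mem hDp h0, h1⟩

theorem exists_subset_stoneCechSupport_notMem (E : Type*) [NormedAddCommGroup E] [NormedSpace ℝ E]
    [Nontrivial E] {C : Set (StoneCech X)} (hC : IsClosed C) {p : StoneCech X} (hp : p ∉ C) :
    ∃ f : X →ᵇ E, C ⊆ stoneCechSupport f ∧ p ∉ stoneCechSupport f := by
  obtain ⟨e, he⟩ := exists_ne (0 : E)
  obtain ⟨χ, h0, h1⟩ := exists_eventually_eq_zero_eqOn_one hC hp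
  refine ⟨restrictUnit χ • const X e, fun c hc => ?_,
    notMem_stoneCechSupport_restrictUnit_smul h0 _⟩
  refine mem_stoneCechSupport_restrictUnit_smul_const ?_ he
  simp [h1 hc]

theorem eq_of_forall_notMem_stoneCechSupport [Nontrivial E] {p p' : StoneCech X}
    (h : ∀ f : X →ᵇ E, p' ∉ stoneCechSupport f → p ∉ stoneCechSupport f) : p = p' := by
  by_contra hne
  obtain ⟨f, hf, hf'⟩ := exists_subset_stoneCechSupport_notMem E isClosed_singleton (Ne.symm hne)
  exact h f hf' (hf rfl)

theorem continuous_of_forall_isClosed_preimage_stoneCechSupport (E : Type*) [NormedAddCommGroup E]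
    [NormedSpace ℝ E] [Nontrivial E] {K : Type*} [TopologicalSpace K] {h : K → StoneCech X}
    (hh : ∀ f : X →ᵇ E, IsClosed (h ⁻¹' stoneCechSupport f)) : Continuous h := by
  have basis : TopologicalSpace.IsTopologicalBasis
      (range fun f : X →ᵇ E => (stoneCechSupport f)ᶜ) := by
    refine TopologicalSpace.isTopologicalBasis_of_isOpen_of_nhds ?_ fun p U hpU hU => ?_
    · rintro _ ⟨f, rfl⟩
      exact (isClosed_stoneCechSupport f).isOpen_compl
    · obtain ⟨f, hUf, hpf⟩ :=
        exists_subset_stoneCechSupport_notMem E hU.isClosed_compl (not_not.2 hpU)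
      exact ⟨_, mem_range_self f, hpf, compl_subset_comm.1 hUf⟩
  refine basis.continuous_iff.2 ?_
  rintro _ ⟨f, rfl⟩
  exact (hh f).isOpen_compl

end Support

section SupportHomeomorphism

theorem SeparatingB.map_eq_zero_or {X Y E F : Type} [TopologicalSpace X] [TopologicalSpace Y]
    [NormedAddCommGroup E] [NormedAddCommGroup F] {T : (X →ᵇ E) → (Y →ᵇ F)} (hT : SeparatingB T)
    {f g : X →ᵇ E} (h : ∀ x, f x = 0 ∨ g x = 0) (y : Y) : T f y = 0 ∨ T g y = 0 := by
  simpa using hT f g (by simpa using h) y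

theorem exists_forall_exists_mem_stoneCechSupport {X Y E F : Type*} [TopologicalSpace X]
    [TopologicalSpace Y] [NormedAddCommGroup E] [NormedSpace ℝ E] [NormedAddCommGroup F]
    (T : (X →ᵇ E) →+ (Y →ᵇ F)) {q : StoneCech Y} (hq : ∃ f, q ∈ stoneCechSupport (T f)) :
    ∃ p : StoneCech X, ∀ χ : C(StoneCech X, ℝ), (∀ᶠ p' in 𝓝 p, χ p' = 0) →
      ∃ f, q ∈ stoneCechSupport (T (f - restrictUnit χ • f)) := by
  by_contra! hnone
  obtain ⟨χ, hχ, hTχ⟩ : ∃ χ : C(StoneCech X, ℝ), EqOn χ 0 univ ∧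
      ∀ f, q ∉ stoneCechSupport (T (f - restrictUnit χ • f)) := by
    refine isCompact_univ.induction_on ⟨1, eqOn_empty _ _, fun f => ?_⟩
      (fun s t hst ⟨χ, hχ, hTχ⟩ => ⟨χ, hχ.mono hst, hTχ⟩) ?_ fun p _ => ?_
    · have hf : f - restrictUnit (1 : C(StoneCech X, ℝ)) • f = 0 := by ext; simp
      simp [hf, stoneCechSupport]
    · rintro s t ⟨χ, hχ, hTχ⟩ ⟨χ', hχ', hTχ'⟩
      refine ⟨χ * χ', ?_, fun f => ?_⟩
      · rintro p (hp | hp)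
        · simp [hχ hp]
        · simp [hχ' hp]
      · have hf : f - restrictUnit (χ * χ') • f =
            (f - restrictUnit χ' • f) +
              (restrictUnit χ' • f - restrictUnit χ • (restrictUnit χ' • f)) := by
          ext; simp [mul_smul]
        rw [hf, map_add]
        exact notMem_stoneCechSupport_add (hTχ' f) (hTχ _)
    · obtain ⟨χ, hχ, hTχ⟩ := hnone p
      exact ⟨{p' | χ p' = 0}, mem_nhdsWithin_of_mem_nhds hχ, χ, fun _ => id, hTχ⟩
  obtain ⟨f, hf⟩ := hq
  refine hTχ f ?_
  have hχf : f - restrictUnit χ • f = f := by ext; simp [hχ (mem_univ _)]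
  rwa [hχf]

theorem SeparatingB.exists_forall_notMem_stoneCechSupport {X Y E F : Type} [TopologicalSpace X]
    [TopologicalSpace Y] [NormedAddCommGroup E] [NormedSpace ℝ E] [NormedAddCommGroup F]
    [NormedSpace ℝ F] [Nontrivial F] {T : (X →ᵇ E) ≃+ (Y →ᵇ F)} (hT : SeparatingB T)
    (q : StoneCech Y) :
    ∃ p : StoneCech X, ∀ f, p ∉ stoneCechSupport f → q ∉ stoneCechSupport (T f) := by
  obtain ⟨w, hw⟩ := exists_ne (0 : F)
  obtain ⟨e, he⟩ := T.surjective (const Y w)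
  have hq : q ∈ stoneCechSupport (T e) := by
    by_contra hq
    simpa [he, hw] using normAt_eq_zero_of_notMem_stoneCechSupport hq
  obtain ⟨p, hp⟩ := exists_forall_exists_mem_stoneCechSupport T.toAddMonoidHom ⟨e, hq⟩
  refine ⟨p, fun f hpf hqf => hw ?_⟩
  obtain ⟨χ, hχp, hχf⟩ := exists_eventually_eq_zero_eqOn_one (isClosed_stoneCechSupport f) hpf
  obtain ⟨χ', hχ'p, hχ'χ⟩ := exists_eventually_eq_zero_eqOn_one (p := p)
    (isClosed_closure (s := Function.support χ))
    (by simpa [mem_closure_iff_frequently, not_frequently] using hχp)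
  obtain ⟨g, hqg⟩ := hp χ' hχ'p
  have hf : ∀ y, T f y ≠ 0 → ‖T (restrictUnit χ • e) y‖ = ‖w‖ := fun y hy => by
    have hdisj (x) : f x = 0 ∨ (e - restrictUnit χ • e) x = 0 := by
      refine or_iff_not_imp_left.2 fun hx => ?_
      simp [hχf (stoneCechUnit_mem_stoneCechSupport hx)]
    have := (hT.map_eq_zero_or hdisj y).resolve_left hy
    rw [map_sub, he, BoundedContinuousFunction.sub_apply, sub_eq_zero] at this
    exact (congrArg norm this).symm
  have hg : ∀ y, T (g - restrictUnit χ' • g) y ≠ 0 →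
      ‖T (restrictUnit χ • e) y‖ = 0 := fun y hy => by
    have hdisj (x) : (g - restrictUnit χ' • g) x = 0 ∨ (restrictUnit χ • e) x = 0 := by
      by_cases hx : χ (stoneCechUnit x) = 0
      · simp [hx]
      · simp [hχ'χ (subset_closure hx)]
    exact norm_eq_zero.2 ((hT.map_eq_zero_or hdisj y).resolve_left hy)
  exact norm_eq_zero.1 <| (normAt_eq_of_mem_stoneCechSupport hqf hf).symm.trans
    (normAt_eq_of_mem_stoneCechSupport hqg hg)

variable {X Y E F : Type*} [TopologicalSpace X] [TopologicalSpace Y] [NormedAddCommGroup E]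
  [NormedAddCommGroup F]

/-- The homeomorphism `H : βY ≃ₜ βX` is a support map for `T`: the support in `βX` of `f` is the
image under `H` of the support in `βY` of `T f`. -/
def CarriesSupport (T : (X →ᵇ E) ≃+ (Y →ᵇ F)) (H : StoneCech Y ≃ₜ StoneCech X) : Prop :=
  ∀ f q, H q ∈ stoneCechSupport f ↔ q ∈ stoneCechSupport (T f)

theorem CarriesSupport.symm {T : (X →ᵇ E) ≃+ (Y →ᵇ F)} {H : StoneCech Y ≃ₜ StoneCech X}
    (hH : CarriesSupport T H) : CarriesSupport T.symm H.symm := fun g p => by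
  simpa using (hH (T.symm g) (H.symm p)).symm

theorem exists_carriesSupport {X Y E F : Type} [TopologicalSpace X] [TopologicalSpace Y]
    [NormedAddCommGroup E] [NormedSpace ℝ E] [Nontrivial E] [NormedAddCommGroup F]
    [NormedSpace ℝ F] [Nontrivial F] {T : (X →ᵇ E) ≃+ (Y →ᵇ F)} (hT : SeparatingB T)
    (hT' : SeparatingB T.symm) : ∃ H, CarriesSupport T H := by
  choose h hh using hT.exists_forall_notMem_stoneCechSupport
  choose k hk using hT'.exists_forall_notMem_stoneCechSupport
  have hkh (q) : k (h q) = q := .symm <| eq_of_forall_notMem_stoneCechSupport (E := F)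
    fun g hg => by simpa using hh q _ (hk _ g hg)
  have hhk (p) : h (k p) = p := .symm <| eq_of_forall_notMem_stoneCechSupport (E := E)
    fun f hf => by simpa using hk p _ (hh _ f hf)
  have hsupp (f q) : h q ∈ stoneCechSupport f ↔ q ∈ stoneCechSupport (T f) := by
    refine not_iff_not.1 ⟨hh q f, fun hq => ?_⟩
    simpa using hk (h q) (T f) (by rwa [hkh])
  have hcont : Continuous h := continuous_of_forall_isClosed_preimage_stoneCechSupport E fun f => by
    rw [show h ⁻¹' stoneCechSupport f = stoneCechSupport (T f) from ext (hsupp f)]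
    exact isClosed_stoneCechSupport (T f)
  exact ⟨Continuous.homeoOfEquivCompactToT2 (f := ⟨h, k, hkh, hhk⟩) hcont, hsupp⟩

end SupportHomeomorphism

section Gluing

variable {X E : Type*} [TopologicalSpace X] [NormedAddCommGroup E]

theorem exists_hasSum_of_pairwise_eq_zero_or {ι : Type*} {s : ι → X →ᵇ E} {M : ℝ}
    (hs : ∀ x, Pairwise fun i j => s i x = 0 ∨ s j x = 0) (hM : ∀ i x, ‖s i x‖ ≤ M)
    (hlim : TendstoLocallyUniformly (fun i => ⇑(s i)) 0 cofinite) :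
    ∃ G : X →ᵇ E, ∀ x, HasSum (fun i => s i x) (G x) := by
  classical
  rcases isEmpty_or_nonempty ι with _ | _
  · exact ⟨0, fun x => hasSum_empty⟩
  have hk (x) : ∃ k, ∀ i, i ≠ k → s i x = 0 := by
    by_cases h : ∃ k, s k x ≠ 0
    · obtain ⟨k, hk⟩ := h
      exact ⟨k, fun i hi => (hs x hi).resolve_right hk⟩
    · push Not at h
      exact ⟨Classical.arbitrary ι, fun i _ => h i⟩
  choose k hk using hk
  have hunif : TendstoLocallyUniformly (fun (J : Finset ι) x => ∑ i ∈ J, s i x)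
      (fun x => s (k x) x) atTop := by
    refine Metric.tendstoLocallyUniformly_iff.2 fun ε hε x => ?_
    obtain ⟨V, hV, hVs⟩ := Metric.tendstoLocallyUniformly_iff.1 hlim ε hε x
    refine ⟨V, hV, eventually_atTop.2 ⟨(eventually_cofinite.1 hVs).toFinset, fun J hJ y hy => ?_⟩⟩
    by_cases hkJ : k y ∈ J
    · rwa [Finset.sum_eq_single_of_mem _ hkJ fun i _ => hk y i, dist_self]
    · rw [Finset.sum_eq_zero fun i hi => hk y i (ne_of_mem_of_not_mem hi hkJ)]
      have hkV : k y ∉ (eventually_cofinite.1 hVs).toFinset := fun h => hkJ (hJ h)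
      simp only [Finite.mem_toFinset, mem_ofPred_eq, not_not] at hkV
      simpa [dist_comm] using hkV y hy
  have hcont : Continuous fun x => s (k x) x :=
    hunif.continuous (Eventually.of_forall fun J => by fun_prop).frequently
  exact ⟨.ofNormedAddCommGroup _ hcont M fun x => hM _ _, fun x => hasSum_single (k x) (hk x)⟩

theorem exists_boundedContinuous_one_on_Icc_zero_off_Ioo :
    ∃ φ : ℝ →ᵇ ℝ, (∀ s, φ s ∈ Icc 0 1) ∧ EqOn φ 1 (Icc (1 / 4) 1) ∧ EqOn φ 0 (Ioo (1 / 8) 2)ᶜ := by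
  obtain ⟨φ, h0, h1, h01⟩ := exists_bounded_zero_one_of_closed
    (isOpen_Ioo (a := (1 / 8 : ℝ)) (b := 2)).isClosed_compl
    (isClosed_Icc (a := (1 / 4 : ℝ)) (b := 1))
    (disjoint_compl_left_iff_subset.2 (Icc_subset_Ioo (by norm_num) (by norm_num)))
  exact ⟨φ, h01, h1, h0⟩

theorem antitone_of_le_mul {t : ℕ → ℝ} {r : ℝ} (hr : r ≤ 1) (ht : ∀ n, 0 ≤ t n)
    (ht' : ∀ n, t (n + 1) ≤ r * t n) : Antitone t :=
  antitone_nat_of_succ_le fun n => (ht' n).trans (mul_le_of_le_one_left (ht n) hr)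

theorem tendsto_zero_of_le_mul {t : ℕ → ℝ} {r : ℝ} (hr : r < 1) (ht : ∀ n, 0 ≤ t n)
    (ht' : ∀ n, t (n + 1) ≤ r * t n) : Tendsto t atTop (𝓝 0) :=
  (summable_of_ratio_norm_eventually_le hr <| .of_forall fun n => by
    simpa only [Real.norm_of_nonneg (ht _)] using ht' n).tendsto_atTop_zero

theorem pairwise_disjoint_Ioo_of_le_mul {t : ℕ → ℝ} (ht : ∀ n, 0 ≤ t n)
    (ht' : ∀ n, t (n + 1) ≤ 1 / 16 * t n) :
    Pairwise (Function.onFun Disjoint fun n => Ioo (t n / 8) (2 * t n)) := by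
  refine (pairwise_disjoint_on _).2 fun n m hnm => disjoint_left.2 fun s hn hm => ?_
  linarith [hn.1, hm.2, antitone_of_le_mul (by norm_num) ht ht' (Nat.succ_le_of_lt hnm), ht' n]

theorem tendstoLocallyUniformly_zero_of_eq_zero_of_le {v : X → ℝ} (hv : Continuous v) {t : ℕ → ℝ}
    (ht : Tendsto t atTop (𝓝 0)) {s : ℕ → X → E} (hs : ∀ n x, t n ≤ v x → s n x = 0) {b : ℕ → ℝ}
    (hsb : ∀ n x, ‖s n x‖ ≤ b n) (hb : ∀ x, v x ≤ 0 → Tendsto b atTop (𝓝 0)) :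
    TendstoLocallyUniformly s 0 atTop := by
  refine Metric.tendstoLocallyUniformly_iff.2 fun ε hε x => ?_
  rcases le_or_gt (v x) 0 with hx | hx
  · refine ⟨univ, univ_mem, ?_⟩
    filter_upwards [(hb x hx).eventually_lt_const hε] with n hn z _
    simpa using (hsb n z).trans_lt hn
  · refine ⟨{z | v x / 2 < v z}, hv.continuousAt.eventually_const_lt (half_lt_self hx), ?_⟩
    filter_upwards [ht.eventually_lt_const (half_pos hx)] with n hn z hz
    simpa [hs n z (hn.trans hz).le] using hε

variable [NormedSpace ℝ E]

theorem exists_eq_on_shells {v : X → ℝ} (hv : Continuous v) {t : ℕ → ℝ} (ht : ∀ n, 0 < t n)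
    (ht' : ∀ n, t (n + 1) ≤ 1 / 16 * t n) {a : ℕ → X →ᵇ E} {b : ℕ → ℝ} {M : ℝ}
    (hb : ∀ n, b n ∈ Icc 0 M) (hab : ∀ n x, v x < 2 * t n → ‖a n x‖ ≤ b n)
    (hlim : ∀ x, v x ≤ 0 → Tendsto b atTop (𝓝 0)) :
    ∃ G : X →ᵇ E, ∀ n x, v x ∈ Icc (t n / 4) (t n) → G x = a n x := by
  obtain ⟨φ, hφ, hφ1, hφ0⟩ := exists_boundedContinuous_one_on_Icc_zero_off_Ioo
  let s (n : ℕ) : X →ᵇ E := φ.compContinuous ⟨fun x => v x / t n, by fun_prop⟩ • a n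
  have hs_apply (n x) : s n x = φ (v x / t n) • a n x := rfl
  have hs_zero {n x} (h : v x ∉ Ioo (t n / 8) (2 * t n)) : s n x = 0 := by
    rw [hs_apply, hφ0, Pi.zero_apply, zero_smul]
    rwa [mem_compl_iff, mem_Ioo, lt_div_iff₀ (ht n), div_lt_iff₀ (ht n), one_div_mul_eq_div]
  have hs_eq {n x} (h : v x ∈ Icc (t n / 4) (t n)) : s n x = a n x := by
    rw [hs_apply, hφ1, Pi.one_apply, one_smul]
    rwa [mem_Icc, le_div_iff₀ (ht n), div_le_iff₀ (ht n), one_div_mul_eq_div, one_mul]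
  have hdisj {n m x} (hnm : n ≠ m) (h : v x ∈ Ioo (t n / 8) (2 * t n)) : s m x = 0 :=
    hs_zero (disjoint_left.1 (pairwise_disjoint_Ioo_of_le_mul (fun n => (ht n).le) ht' hnm) h)
  have hnorm (n x) : ‖s n x‖ ≤ b n := by
    by_cases h : v x ∈ Ioo (t n / 8) (2 * t n)
    · rw [hs_apply, norm_smul, Real.norm_of_nonneg (hφ _).1]
      exact (mul_le_of_le_one_left (norm_nonneg _) (hφ _).2).trans (hab n x h.2)
    · simpa [hs_zero h] using (hb n).1
  have ht0 : Tendsto (fun n => 2 * t n) atTop (𝓝 0) := by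
    simpa using (tendsto_zero_of_le_mul (by norm_num) (fun n => (ht n).le) ht').const_mul 2
  have hunif : TendstoLocallyUniformly (fun n => ⇑(s n)) 0 cofinite :=
    Nat.cofinite_eq_atTop ▸ tendstoLocallyUniformly_zero_of_eq_zero_of_le hv ht0
      (fun n x hx => hs_zero fun h => h.2.not_ge hx) hnorm hlim
  obtain ⟨G, hG⟩ := exists_hasSum_of_pairwise_eq_zero_or
    (fun x n m hnm => or_iff_not_imp_left.2 fun h => hdisj hnm (not_imp_comm.1 hs_zero h))
    (fun n x => (hnorm n x).trans (hb n).2) hunif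
  refine ⟨G, fun n x hx => (hG x).unique <| hs_eq hx ▸ hasSum_single n fun m hm => hdisj hm.symm ?_⟩
  exact ⟨by linarith [ht n, hx.1], by linarith [ht n, hx.2]⟩

end Gluing

section GlidingHump

theorem exists_seq_forall_succ_of_forall_exists {α : Type*} {P : ℕ → α → Prop}
    {R : α → α → Prop} (h0 : ∃ a, P 0 a) (h : ∀ n a, P n a → ∃ b, P (n + 1) b ∧ R a b) :
    ∃ s : ℕ → α, (∀ n, P n (s n)) ∧ ∀ n, R (s n) (s (n + 1)) := by
  choose f hfP hfR using h
  let s : ∀ n, {a // P n a} := Nat.rec ⟨_, h0.choose_spec⟩ fun n a => ⟨f n a a.2, hfP n a a.2⟩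
  exact ⟨fun n => (s n).1, fun n => (s n).2, fun n => hfR n (s n).1 (s n).2⟩

theorem exists_seq_of_mem_closure_setOf_pos {X : Type*} [TopologicalSpace X]
    {v : C(StoneCech X, ℝ)} {p : StoneCech X} (hv : v p = 0) (hp : p ∈ closure {p | 0 < v p})
    {U : ℕ → Set (StoneCech X)} (hU : ∀ n, U n ∈ 𝓝 p) :
    ∃ x : ℕ → X, (∀ n, stoneCechUnit (x n) ∈ U n ∧ 0 < v (stoneCechUnit (x n))) ∧
      ∀ n, v (stoneCechUnit (x (n + 1))) ≤ 1 / 16 * v (stoneCechUnit (x n)) := by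
  have hex (n) {δ : ℝ} (hδ : 0 < δ) : ∃ x, (stoneCechUnit x ∈ U n ∧ 0 < v (stoneCechUnit x)) ∧
      v (stoneCechUnit x) ≤ δ := by
    have hδp : ∀ᶠ p' in 𝓝 p, v p' < δ := v.continuous.continuousAt.eventually_lt_const (hv ▸ hδ)
    have hp' : p ∈ closure ({p | 0 < v p} ∩ range stoneCechUnit) :=
      closure_minimal (denseRange_stoneCechUnit.open_subset_closure_inter
        (isOpen_lt continuous_const v.continuous)) isClosed_closure hp
    obtain ⟨_, ⟨hx, hxδ⟩, hx0, x, rfl⟩ :=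
      mem_closure_iff_nhds.1 hp' _ (inter_mem (hU n) hδp)
    exact ⟨x, ⟨hx, hx0⟩, hxδ.le⟩
  exact exists_seq_forall_succ_of_forall_exists
    (P := fun n x => stoneCechUnit x ∈ U n ∧ 0 < v (stoneCechUnit x))
    ((hex 0 one_pos).imp fun _ => And.left) fun n x hx => hex (n + 1) (mul_pos (by norm_num) hx.2)

variable {X Y E F : Type*} [TopologicalSpace X] [TopologicalSpace Y] [NormedAddCommGroup E]
  [NormedAddCommGroup F] [NormedSpace ℝ F] {T : (X →ᵇ E) ≃+ (Y →ᵇ F)}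
  {H : StoneCech Y ≃ₜ StoneCech X}

theorem CarriesSupport.normAt_map_eq (hH : CarriesSupport T H) {f g : X →ᵇ E} {q : StoneCech Y}
    (h : ∀ᶠ p in 𝓝 (H q), ∀ x, stoneCechUnit x = p → f x = g x) :
    normAt q (T f) = normAt q (T g) := by
  refine normAt_eq_of_normAt_sub_eq_zero (normAt_eq_zero_of_notMem_stoneCechSupport ?_)
  rw [← map_sub, ← hH, notMem_stoneCechSupport_iff]
  filter_upwards [h] with p hp x hx
  exact sub_eq_zero.2 (hp x hx)

variable [NormedSpace ℝ E]

theorem CarriesSupport.not_tendsto_normAt_map_atTop (hH : CarriesSupport T H) {q : StoneCech Y}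
    {v : C(StoneCech X, ℝ)} (hv : v (H q) = 0) (hq : H q ∈ closure {p | 0 < v p})
    {a : ℕ → X →ᵇ E} {b : ℕ → ℝ} (hb0 : ∀ n, 0 ≤ b n) (hb : Tendsto b atTop (𝓝 0))
    (hab : ∀ n, ∃ ε > 0, ∀ x, v (stoneCechUnit x) < ε → ‖a n x‖ ≤ b n) :
    ¬ Tendsto (fun n => normAt q (T (a n))) atTop atTop := by
  intro htop
  choose ε hε hab using hab
  obtain ⟨M, hM⟩ := hb.bddAbove_range
  have hU (n) : {p | 4 * v p < ε n} ∩ {p | normAt q (T (a n)) - 1 < normAt (H.symm p) (T (a n))} ∈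
      𝓝 (H q) :=
    ((isOpen_lt (by fun_prop) continuous_const).inter
      (isOpen_lt continuous_const (by fun_prop))).mem_nhds
      ⟨by simpa [hv] using hε n, by simp⟩
  obtain ⟨x, hx, hx16⟩ := exists_seq_of_mem_closure_setOf_pos hv hq hU
  obtain ⟨G, hG⟩ := exists_eq_on_shells (v := fun x => v (stoneCechUnit x))
    (t := fun n => 2 * v (stoneCechUnit (x n))) (v.continuous.comp continuous_stoneCechUnit)
    (fun n => by linarith [(hx n).2])
    (fun n => by linarith [hx16 n]) (fun n => ⟨hb0 n, hM (mem_range_self n)⟩)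
    (fun n z hz => hab n z (by linarith [mem_ofPred.1 (hx n).1.1])) fun _ _ => hb
  have hle (n) : normAt q (T (a n)) ≤ ‖T G‖ + 1 := by
    have hshell : ∀ᶠ p in 𝓝 (stoneCechUnit (x n)),
        v p ∈ Ioo (v (stoneCechUnit (x n)) / 2) (2 * v (stoneCechUnit (x n))) :=
      v.continuous.continuousAt.eventually_mem
        (Ioo_mem_nhds (by linarith [(hx n).2]) (by linarith [(hx n).2]))
    have hloc : normAt (H.symm (stoneCechUnit (x n))) (T G) =
        normAt (H.symm (stoneCechUnit (x n))) (T (a n)) := by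
      refine hH.normAt_map_eq ?_
      rw [H.apply_symm_apply]
      filter_upwards [hshell] with p hp z hz
      subst hz
      exact hG n z ⟨by linarith [hp.1], hp.2.le⟩
    linarith [mem_ofPred.1 (hx n).1.2, normAt_le_norm (H.symm (stoneCechUnit (x n))) (T G)]
  obtain ⟨n, hn⟩ := (htop.eventually_gt_atTop (‖T G‖ + 1)).exists
  exact (hle n).not_gt hn

theorem CarriesSupport.normAt_map_eq_zero (hH : CarriesSupport T H) {f : X →ᵇ E} {q : StoneCech Y}
    (hf : normAt (H q) f = 0) : normAt q (T f) = 0 := by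
  by_contra hne
  have hpos : 0 < normAt q (T f) := (apply_nonneg _ _).lt_of_ne' hne
  have hq : H q ∈ stoneCechSupport f := by
    rw [hH]
    exact not_imp_comm.1 normAt_eq_zero_of_notMem_stoneCechSupport hne
  refine hH.not_tendsto_normAt_map_atTop (v := normExtension f) (a := fun n => (n : ℝ) • f)
    (b := fun n => 1 / ((n : ℝ) + 1)) hf (stoneCechSupport_subset_closure f hq)
    (fun n => by positivity) tendsto_one_div_add_atTop_nhds_zero_nat
    (fun n => ⟨1 / ((n : ℝ) + 1) ^ 2, by positivity, fun x hx => ?_⟩) ?_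
  · rw [normExtension_unit] at hx
    calc ‖((n : ℝ) • f) x‖ = n * ‖f x‖ := by simp [norm_smul]
      _ ≤ (n + 1) * (1 / ((n : ℝ) + 1) ^ 2) := by gcongr; linarith
      _ = 1 / ((n : ℝ) + 1) := by field_simp
  · have h (n : ℕ) : normAt q (T ((n : ℝ) • f)) = n * normAt q (T f) := by
      rw [Nat.cast_smul_eq_nsmul, map_nsmul, ← Nat.cast_smul_eq_nsmul ℝ, map_smul_eq_mul,
        Real.norm_natCast]
    simpa only [h] using tendsto_natCast_atTop_atTop.atTop_mul_const hpos

end GlidingHump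

section FiberMaps

theorem exists_seq_norm_tendsto_atTop_map_tendsto_zero {E F : Type*} [NormedAddCommGroup E]
    [NormedSpace ℝ E] [NormedAddCommGroup F] [NormedSpace ℝ F] (J : E →+ F)
    (hJ : ¬ ∃ c > 0, ∀ e, c * ‖e‖ ≤ ‖J e‖) :
    ∃ e : ℕ → E, Tendsto (fun n => ‖e n‖) atTop atTop ∧ Tendsto (fun n => J (e n)) atTop (𝓝 0) := by
  push Not at hJ
  have hex (n : ℕ) : ∃ e, (n : ℝ) + 1 ≤ ‖e‖ ∧ ‖J e‖ ≤ 2 * (1 / ((n : ℝ) + 1)) := by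
    obtain ⟨e, he⟩ := hJ (1 / ((n : ℝ) + 1) ^ 2) (by positivity)
    have he0 : 0 < ‖e‖ := by
      by_contra h
      simp [norm_le_zero_iff.1 (not_lt.1 h)] at he
    obtain ⟨r, hr, hr'⟩ := exists_rat_btwn
      (show ((n : ℝ) + 1) / ‖e‖ < 2 * (n + 1) / ‖e‖ by gcongr; linarith)
    have hr0 : (0 : ℝ) < r := lt_trans (by positivity) hr
    refine ⟨(r : ℝ) • e, ?_, ?_⟩
    · rw [norm_smul, Real.norm_of_nonneg hr0.le]
      exact ((div_lt_iff₀ he0).1 hr).le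
    · rw [map_ratCast_smul J ℝ ℝ, norm_smul, Real.norm_of_nonneg hr0.le]
      calc r * ‖J e‖ ≤ 2 * (n + 1) / ‖e‖ * (1 / ((n : ℝ) + 1) ^ 2 * ‖e‖) := by gcongr
        _ = 2 * (1 / ((n : ℝ) + 1)) := by field_simp
  choose e he hJe using hex
  refine ⟨e, tendsto_atTop_mono he (tendsto_natCast_atTop_atTop.atTop_add tendsto_const_nhds),
    squeeze_zero_norm hJe ?_⟩
  simpa using (tendsto_one_div_add_atTop_nhds_zero_nat (𝕜 := ℝ)).const_mul 2

variable {X Y E F : Type*} [TopologicalSpace X] [TopologicalSpace Y] [NormedAddCommGroup E]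
  [NormedAddCommGroup F] {T : (X →ᵇ E) ≃+ (Y →ᵇ F)} {H : StoneCech Y ≃ₜ StoneCech X}

/-- The additive map `e ↦ (T ê)(y)`, where `ê` is the constant function with value `e`; it is the
map `J_y` of the representation of `T`. -/
def fiberMap (T : (X →ᵇ E) ≃+ (Y →ᵇ F)) (y : Y) : E →+ F :=
  AddMonoidHom.mk' (fun e => T (const X e) y) fun e e' =>
    DFunLike.congr_fun (map_add T (const X e) (const X e')) y

@[simp]
theorem fiberMap_apply (y : Y) (e : E) : fiberMap T y e = T (const X e) y :=
  rfl

variable [NormedSpace ℝ E] [NormedSpace ℝ F]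

theorem CarriesSupport.map_apply_eq_fiberMap (hH : CarriesSupport T H) {x : X} {y : Y}
    (hxy : H (stoneCechUnit y) = stoneCechUnit x) (f : X →ᵇ E) : T f y = fiberMap T y (f x) := by
  have hf : normAt (H (stoneCechUnit y)) (f - const X (f x)) = 0 := by simp [hxy]
  simpa [sub_eq_zero] using hH.normAt_map_eq_zero hf

theorem CarriesSupport.normAt_symm_const_fiberMap (hH : CarriesSupport T H) (y : Y) (e : E) :
    normAt (H (stoneCechUnit y)) (T.symm (const Y (fiberMap T y e))) = ‖e‖ := by
  have hg : normAt (H.symm (H (stoneCechUnit y)))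
      (const Y (fiberMap T y e) - T (const X e)) = 0 := by simp
  have := hH.symm.normAt_map_eq_zero hg
  rw [map_sub, T.symm_apply_apply] at this
  exact (normAt_eq_of_normAt_sub_eq_zero this).trans (normAt_const _ e)

theorem CarriesSupport.exists_pos_mul_norm_le_norm_fiberMap (hH : CarriesSupport T H) {y : Y}
    {u : C(StoneCech X, ℝ)} (hu : u (H (stoneCechUnit y)) = 0)
    (hpos : ∀ x, 0 < u (stoneCechUnit x)) :
    ∃ c > 0, ∀ e, c * ‖e‖ ≤ ‖fiberMap T y e‖ := by
  by_contra h
  obtain ⟨e, he, hJe⟩ := exists_seq_norm_tendsto_atTop_map_tendsto_zero _ h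
  have hdense : Dense {q | 0 < u (H q)} :=
    (denseRange_stoneCechUnit.mono (range_subset_iff.2 hpos : _ ⊆ {p | 0 < u p})).preimage
      H.isOpenMap
  refine hH.symm.not_tendsto_normAt_map_atTop (v := u.comp H) (q := H (stoneCechUnit y))
    (a := fun n => const Y (fiberMap T y (e n))) (b := fun n => ‖fiberMap T y (e n)‖)
    (by simpa using hu) (hdense _) (fun n => norm_nonneg _) (by simpa using hJe.norm)
    (fun n => ⟨1, one_pos, fun _ _ => le_rfl⟩) ?_
  simpa only [hH.normAt_symm_const_fiberMap] using he

end FiberMaps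

section RangeOfUnit

theorem exists_continuousMap_forall_lt_of_lt {ι K : Type*} [TopologicalSpace K] {p : K}
    {d : ι → C(K, ℝ)} (hd : ∀ i x, 0 ≤ d i x) (hdp : ∀ i, d i p = 0) {ε δ : ι → ℝ}
    (hε : ∀ i, 0 < ε i) (hεs : Summable ε) (hδ : ∀ i, 0 < δ i) :
    ∃ w : C(K, ℝ), (∀ x, 0 ≤ w x) ∧ w p = 0 ∧ ∀ i x, w x < ε i → d i x < δ i := by
  have h0 (i) (x) : 0 ≤ ε i * min 1 (d i x / δ i) :=
    mul_nonneg (hε i).le (le_min zero_le_one (div_nonneg (hd i x) (hδ i).le))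
  have hle (i) (x) : ε i * min 1 (d i x / δ i) ≤ ε i :=
    mul_le_of_le_one_right (hε i).le (min_le_left _ _)
  have hsum (x) : Summable fun i => ε i * min 1 (d i x / δ i) :=
    hεs.of_nonneg_of_le (h0 · x) (hle · x)
  refine ⟨⟨fun x => ∑' i, ε i * min 1 (d i x / δ i), continuous_tsum (fun i => by fun_prop) hεs
    fun i x => ?_⟩, fun x => tsum_nonneg (h0 · x), by simp [hdp], fun i x hx => ?_⟩
  · rw [Real.norm_of_nonneg (h0 i x)]
    exact hle i x
  · have hlt : ε i * min 1 (d i x / δ i) < ε i * 1 :=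
      ((hsum x).le_tsum i fun j _ => h0 j x).trans_lt (by simpa using hx)
    have hmin : min 1 (d i x / δ i) < 1 := lt_of_mul_lt_mul_left hlt (hε i).le
    exact (div_lt_one (hδ i)).1 ((min_lt_iff.1 hmin).resolve_left (lt_irrefl 1))

theorem exists_mem_Icc_pow_or {r : ℝ} (h0 : 0 < r) (h1 : r ≤ 1) :
    (∃ n : ℕ, r ∈ Icc ((1 / 16) ^ n / 4) ((1 / 16) ^ n)) ∨
      ∃ n : ℕ, r ∈ Icc (1 / 4 * (1 / 16) ^ n / 4) (1 / 4 * (1 / 16) ^ n) := by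
  obtain ⟨m, hm, hm'⟩ := exists_nat_pow_near_of_lt_one h0 h1 (show (0 : ℝ) < 1 / 4 by norm_num)
    (by norm_num)
  have h16 : (1 / 4 : ℝ) ^ 2 = 1 / 16 := by norm_num
  obtain ⟨n, rfl | rfl⟩ := m.even_or_odd'
  · rw [pow_succ, pow_mul, h16] at hm
    rw [pow_mul, h16] at hm'
    exact Or.inl ⟨n, by linarith, by linarith⟩
  · rw [pow_succ, pow_succ, pow_mul, h16] at hm
    rw [pow_succ, pow_mul, h16] at hm'
    exact Or.inr ⟨n, by linarith, by linarith⟩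

theorem eventually_half_le_norm_map_sub {E F : Type*} [SeminormedAddCommGroup E]
    [SeminormedAddCommGroup F] (J : E →+ F) {c : ℝ} (hc : 0 ≤ c) (hJ : ∀ e, c * ‖e‖ ≤ ‖J e‖)
    {e : ℕ → E} (hsep : Pairwise fun m n => 1 ≤ ‖e m - e n‖) (w : F) :
    ∀ᶠ n in atTop, c / 2 ≤ ‖J (e n) - w‖ := by
  by_contra h
  have hfreq (m : ℕ) : ∃ n > m, ‖J (e n) - w‖ < c / 2 := by
    simpa only [not_le] using frequently_atTop'.1 (not_eventually.1 h) m
  obtain ⟨n, -, hn⟩ := hfreq 0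
  obtain ⟨m, hnm, hm⟩ := hfreq n
  have hlt : ‖J (e m - e n)‖ < c := by
    rw [map_sub]
    calc ‖J (e m) - J (e n)‖
        ≤ ‖J (e m) - w‖ + ‖w - J (e n)‖ := norm_sub_le_norm_sub_add_norm_sub _ _ _
      _ < c / 2 + c / 2 := by rw [norm_sub_rev w]; exact add_lt_add hm hn
      _ = c := add_halves c
  have hge : c * 1 ≤ c * ‖e m - e n‖ := mul_le_mul_of_nonneg_left (hsep hnm.ne') hc
  linarith [hJ (e m - e n)]

variable {X Y E F : Type*} [TopologicalSpace X] [TopologicalSpace Y] [NormedAddCommGroup E]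
  [NormedSpace ℝ E] [NormedAddCommGroup F] [NormedSpace ℝ F] {T : (X →ᵇ E) ≃+ (Y →ᵇ F)}
  {H : StoneCech Y ≃ₜ StoneCech X}

theorem mem_closure_le_or_mem_closure_shells {v : C(StoneCech X, ℝ)}
    (hv : ∀ x, 0 < v (stoneCechUnit x)) (p : StoneCech X) :
    p ∈ closure {p | 1 ≤ v p} ∨
      p ∈ closure (stoneCechUnit ''
        {x | ∃ n : ℕ, v (stoneCechUnit x) ∈ Icc ((1 / 16) ^ n / 4) ((1 / 16) ^ n)}) ∨
      p ∈ closure (stoneCechUnit ''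
        {x | ∃ n : ℕ, v (stoneCechUnit x) ∈
          Icc (1 / 4 * (1 / 16) ^ n / 4) (1 / 4 * (1 / 16) ^ n)}) := by
  rw [← mem_union, ← closure_union, ← mem_union, ← closure_union]
  refine closure_mono (range_subset_iff.2 fun x => ?_) (denseRange_stoneCechUnit p)
  rcases le_or_gt 1 (v (stoneCechUnit x)) with h1 | h1
  · exact Or.inl h1
  · exact Or.inr ((exists_mem_Icc_pow_or (hv x) h1.le).imp (mem_image_of_mem _)
      (mem_image_of_mem _))

theorem CarriesSupport.norm_sub_le_normAt_add_normAt (hH : CarriesSupport T H) {p : StoneCech X}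
    {G : X →ᵇ E} {e : E} (hG : normAt p (G - const X e) = 0) (j w : F) :
    ‖j - w‖ ≤ normAt (H.symm p) (T (const X e) - const Y j) +
      normAt (H.symm p) (T G - const Y w) := by
  have hTG : normAt (H.symm p) (T (const X e) - T G) = 0 := by
    rw [map_sub_rev, ← map_sub]
    exact hH.normAt_map_eq_zero (by simpa using hG)
  have hGw : normAt (H.symm p) (T (const X e) - const Y w) = normAt (H.symm p) (T G - const Y w) :=
    normAt_eq_of_normAt_sub_eq_zero (by rwa [sub_sub_sub_cancel_right])
  calc ‖j - w‖ = normAt (H.symm p) (const Y j - const Y w) := (normAt_const _ _).symm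
    _ ≤ normAt (H.symm p) (const Y j - T (const X e)) +
        normAt (H.symm p) (T (const X e) - const Y w) := le_map_sub_add_map_sub _ _ _ _
    _ = _ := by rw [map_sub_rev, hGw]

theorem CarriesSupport.notMem_closure_shells (hH : CarriesSupport T H) {y : Y} {c : ℝ} (hc : 0 < c)
    (hJ : ∀ e, c * ‖e‖ ≤ ‖fiberMap T y e‖) {v : C(StoneCech X, ℝ)}
    (hv : v (H (stoneCechUnit y)) = 0) (hpos : ∀ x, 0 < v (stoneCechUnit x)) {t : ℕ → ℝ}
    (ht : ∀ n, 0 < t n) (ht' : ∀ n, t (n + 1) ≤ 1 / 16 * t n) {δ : ℕ → ℝ}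
    (hδ : Tendsto δ atTop (𝓝 0)) {e : ℕ → E} {R : ℝ} (hR : ∀ n, ‖e n‖ ≤ R)
    (hsep : Pairwise fun m n => 1 ≤ ‖e m - e n‖)
    (hclose : ∀ n p, v p ≤ t n →
      normAt (H.symm p) (T (const X (e n)) - const Y (fiberMap T y (e n))) ≤ δ n) :
    H (stoneCechUnit y) ∉ closure (stoneCechUnit ''
      {x | ∃ n, v (stoneCechUnit x) ∈ Icc (t n / 4) (t n)}) := by
  intro hmem
  obtain ⟨G, hG⟩ := exists_eq_on_shells (v := fun x => v (stoneCechUnit x))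
    (a := fun n => const X (e n)) (v.continuous.comp continuous_stoneCechUnit) ht ht'
    (fun _ => ⟨(norm_nonneg _).trans (hR 0), le_rfl⟩) (fun n x _ => hR n)
    fun x hx => ((hpos x).not_ge hx).elim
  have hnear : ∀ᶠ p in 𝓝 (H (stoneCechUnit y)),
      normAt (H.symm p) (T G - const Y (T G y)) < c / 4 :=
    Tendsto.eventually_lt_const (by simpa using hc)
      (show Continuous fun p => normAt (H.symm p) (T G - const Y (T G y)) by fun_prop).continuousAt
  obtain ⟨N, hN⟩ := eventually_atTop.1 <|
    (hδ.eventually_lt_const (by positivity : 0 < c / 4)).and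
      (eventually_half_le_norm_map_sub (fiberMap T y) hc.le hJ hsep (T G y))
  have hvlt : ∀ᶠ p in 𝓝 (H (stoneCechUnit y)), v p < t N / 4 :=
    v.continuous.continuousAt.eventually_lt_const (by rw [hv]; linarith [ht N])
  obtain ⟨_, ⟨hp, hvp⟩, x, ⟨n, hn⟩, rfl⟩ := mem_closure_iff_nhds.1 hmem _ (hnear.and hvlt)
  have hNn : N ≤ n := by
    by_contra! hnN
    have := antitone_of_le_mul (by norm_num) (fun n => (ht n).le) ht' hnN.le
    linarith [hn.1, mem_ofPred.1 hvp]
  have hle := hH.norm_sub_le_normAt_add_normAt (p := stoneCechUnit x) (G := G) (e := e n)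
    (by simp [hG n x hn]) (fiberMap T y (e n)) (T G y)
  linarith [mem_ofPred.1 hp, hclose n _ hn.2, hN n hNn]

theorem CarriesSupport.not_forall_pos_of_eq_zero (hH : CarriesSupport T H)
    (hE : ¬ FiniteDimensional ℝ E) {y : Y} {u : C(StoneCech X, ℝ)}
    (hu : u (H (stoneCechUnit y)) = 0) : ¬ ∀ x, 0 < u (stoneCechUnit x) := by
  intro hpos
  obtain ⟨c, hc, hJ⟩ := hH.exists_pos_mul_norm_le_norm_fiberMap hu hpos
  obtain ⟨R, e, -, hR, hsep⟩ := exists_seq_norm_le_one_le_norm_sub hE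
  let d (n : ℕ) : C(StoneCech X, ℝ) :=
    ⟨fun p => normAt (H.symm p) (T (const X (e n)) - const Y (fiberMap T y (e n))), by fun_prop⟩
  obtain ⟨w, hw0, hwp, hwd⟩ := exists_continuousMap_forall_lt_of_lt (d := d)
    (p := H (stoneCechUnit y)) (ε := fun n => 2 * (1 / 16 : ℝ) ^ n)
    (δ := fun n => 1 / ((n : ℝ) + 1)) (fun n p => apply_nonneg (normAt _) _) (fun n => by simp [d])
    (fun n => by positivity) ((summable_geometric_of_lt_one (by norm_num) (by norm_num)).mul_left 2)
    (fun n => by positivity)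
  have hu0 (p) : 0 ≤ u p := le_of_forall_stoneCechUnit_le (a := 0) (fun x => (hpos x).le) p
  have hvpos (x) : 0 < (u + w) (stoneCechUnit x) := add_pos_of_pos_of_nonneg (hpos x) (hw0 _)
  have hshells {t : ℕ → ℝ} (ht : ∀ n, 0 < t n) (ht' : ∀ n, t (n + 1) ≤ 1 / 16 * t n)
      (hle : ∀ n, t n ≤ (1 / 16) ^ n) : H (stoneCechUnit y) ∉ closure (stoneCechUnit ''
        {x | ∃ n, (u + w) (stoneCechUnit x) ∈ Icc (t n / 4) (t n)}) := by
    refine hH.notMem_closure_shells hc hJ (by simp [hu, hwp]) hvpos ht ht'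
      tendsto_one_div_add_atTop_nhds_zero_nat hR hsep fun n p hp => (hwd n p ?_).le
    linarith [hu0 p, hp, ContinuousMap.add_apply u w p, ht n, hle n]
  have hlarge : H (stoneCechUnit y) ∉ closure {p | 1 ≤ (u + w) p} := by
    rw [(isClosed_le continuous_const (u + w).continuous).closure_eq]
    simp [hu, hwp]
  refine not_or.2 ⟨hlarge, not_or.2 ⟨hshells (t := fun n => (1 / 16) ^ n) ?_ ?_ ?_,
    hshells (t := fun n => 1 / 4 * (1 / 16) ^ n) ?_ ?_ ?_⟩⟩
    (mem_closure_le_or_mem_closure_shells hvpos _)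
  iterate 2
    · exact fun n => by positivity
    · exact fun n => by rw [pow_succ]; linarith
    · exact fun n => by linarith [pow_pos (show (0 : ℝ) < 1 / 16 by norm_num) n]

end RangeOfUnit

section Realcompact

variable {X Y : Type*} [TopologicalSpace X] [TopologicalSpace Y]

theorem exists_tendsto_of_forall_not_forall_pos {p : StoneCech X}
    (hp : ∀ u : C(StoneCech X, ℝ), u p = 0 → ¬ ∀ x, 0 < u (stoneCechUnit x)) {φ : X → ℝ}
    (hφ : Continuous φ) : ∃ z, Tendsto φ (comap stoneCechUnit (𝓝 p)) (𝓝 z) := by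
  let a : C(StoneCech X, ℝ) := boundedExtension <| ofNormedAddCommGroup
    (fun x => Real.arctan (φ x)) (Real.continuous_arctan.comp hφ) (Real.pi / 2) fun x =>
      abs_le.2 ⟨(Real.neg_pi_div_two_lt_arctan _).le, (Real.arctan_lt_pi_div_two _).le⟩
  have ha (x) : a (stoneCechUnit x) = Real.arctan (φ x) := boundedExtension_unit _ x
  have hcos : Real.cos (a p) ≠ 0 := fun h =>
    hp ((⟨Real.cos, Real.continuous_cos⟩ : C(ℝ, ℝ)).comp a) h fun x => by
      simpa [ha] using Real.cos_arctan_pos (φ x)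
  refine ⟨Real.tan (a p), ((Real.continuousAt_tan.2 hcos).tendsto.comp
    ((a.continuous.tendsto p).comp tendsto_comap)).congr fun x => ?_⟩
  simp [ha, Real.tan_arctan]

theorem Realcompact.t35Space {X : Type} [TopologicalSpace X] (hX : Realcompact X) : T35Space X :=
  let ⟨_, _, he⟩ := hX
  he.isEmbedding.t35Space

theorem Realcompact.mem_range_stoneCechUnit {X : Type} [TopologicalSpace X] (hX : Realcompact X)
    {p : StoneCech X}
    (hp : ∀ u : C(StoneCech X, ℝ), u p = 0 → ¬ ∀ x, 0 < u (stoneCechUnit x)) :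
    p ∈ range (stoneCechUnit : X → StoneCech X) := by
  obtain ⟨ι, e, he⟩ := hX
  have : (comap (stoneCechUnit : X → StoneCech X) (𝓝 p)).NeBot :=
    comap_neBot_iff_frequently.2 <| mem_closure_iff_frequently.1 <| denseRange_stoneCechUnit p
  choose z hz using fun i => exists_tendsto_of_forall_not_forall_pos hp
    ((continuous_apply i).comp he.continuous)
  have hez : Tendsto e (comap stoneCechUnit (𝓝 p)) (𝓝 z) := tendsto_pi_nhds.2 hz
  obtain ⟨x, rfl⟩ : z ∈ range e :=
    he.isClosed_range.mem_of_tendsto hez (Eventually.of_forall mem_range_self)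
  have hx : Tendsto id (comap stoneCechUnit (𝓝 p)) (𝓝 x) := he.isInducing.tendsto_nhds_iff.2 hez
  exact ⟨x, tendsto_nhds_unique ((continuous_stoneCechUnit.tendsto x).comp hx) tendsto_comap⟩

theorem exists_homeomorph_stoneCechUnit_eq [T35Space X] [T35Space Y]
    (H : StoneCech Y ≃ₜ StoneCech X)
    (hH : ∀ y, H (stoneCechUnit y) ∈ range (stoneCechUnit : X → StoneCech X))
    (hH' : ∀ x, H.symm (stoneCechUnit x) ∈ range (stoneCechUnit : Y → StoneCech Y)) :
    ∃ h : Y ≃ₜ X, ∀ y, stoneCechUnit (h y) = H (stoneCechUnit y) := by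
  choose h hh using hH
  choose k hk using hH'
  have hX : IsEmbedding (stoneCechUnit : X → StoneCech X) := isEmbedding_stoneCechUnit
  have hY : IsEmbedding (stoneCechUnit : Y → StoneCech Y) := isEmbedding_stoneCechUnit
  refine ⟨{ toFun := h, invFun := k, left_inv := fun y => hY.injective (by simp [hk, hh])
            right_inv := fun x => hX.injective (by simp [hk, hh])
            continuous_toFun := ?_, continuous_invFun := ?_ }, hh⟩
  · exact hX.continuous_iff.2 ((H.continuous.comp continuous_stoneCechUnit).congr (hh · |>.symm))
  · exact hY.continuous_iff.2
      ((H.symm.continuous.comp continuous_stoneCechUnit).congr (hk · |>.symm))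

end Realcompact

section Representation

theorem CarriesSupport.exists_addEquiv {X Y E F : Type*} [TopologicalSpace X] [TopologicalSpace Y]
    [NormedAddCommGroup E] [NormedSpace ℝ E] [NormedAddCommGroup F] [NormedSpace ℝ F]
    {T : (X →ᵇ E) ≃+ (Y →ᵇ F)} {H : StoneCech Y ≃ₜ StoneCech X} (hH : CarriesSupport T H)
    {h : Y ≃ₜ X} (hh : ∀ y, stoneCechUnit (h y) = H (stoneCechUnit y)) :
    ∃ J : Y → (E ≃+ F), ∀ f y, T f y = J y (f (h y)) := by
  have hT (f y) : T f y = fiberMap T y (f (h y)) := hH.map_apply_eq_fiberMap (hh y).symm f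
  have hT' (g y) : T.symm g (h y) = fiberMap T.symm (h y) (g y) :=
    hH.symm.map_apply_eq_fiberMap (by rw [hh, H.symm_apply_apply]) g
  refine ⟨fun y => { fiberMap T y with
    invFun := fiberMap T.symm (h y)
    left_inv := fun e => ?_
    right_inv := fun e => ?_ }, hT⟩
  · exact (hT' (T (const X e)) y).symm.trans (by rw [T.symm_apply_apply, const_apply])
  · exact (hT (T.symm (const Y e)) y).symm.trans (by rw [T.apply_symm_apply, const_apply])

end Representation

theorem stmt4_general {𝕂 𝕂' X Y E F : Type} [RCLike 𝕂] [RCLike 𝕂']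
    [TopologicalSpace X] [TopologicalSpace Y]
    [NormedAddCommGroup E] [NormedSpace 𝕂 E]
    [NormedAddCommGroup F] [NormedSpace 𝕂' F]
    (hE : ¬ FiniteDimensional 𝕂 E) (hF : ¬ FiniteDimensional 𝕂' F)
    (hX : Realcompact X) (hY : Realcompact Y)
    (T : (X →ᵇ E) ≃+ (Y →ᵇ F)) (hT : SeparatingB ⇑T) (hT' : SeparatingB ⇑T.symm) :
    ∃ (h : Y ≃ₜ X) (J : Y → (E ≃+ F)), ∀ f y, T f y = J y (f (h y)) := by
  let _ : NormedSpace ℝ E := NormedSpace.restrictScalars ℝ 𝕂 E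
  let _ : NormedSpace ℝ F := NormedSpace.restrictScalars ℝ 𝕂' F
  have : IsScalarTower ℝ 𝕂 E := .of_algebraMap_smul fun _ _ => rfl
  have : IsScalarTower ℝ 𝕂' F := .of_algebraMap_smul fun _ _ => rfl
  replace hE : ¬ FiniteDimensional ℝ E := fun _ =>
    hE (Module.Finite.of_restrictScalars_finite ℝ 𝕂 E)
  replace hF : ¬ FiniteDimensional ℝ F := fun _ =>
    hF (Module.Finite.of_restrictScalars_finite ℝ 𝕂' F)
  have : Nontrivial E := not_subsingleton_iff_nontrivial.1 fun _ => hE inferInstance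
  have : Nontrivial F := not_subsingleton_iff_nontrivial.1 fun _ => hF inferInstance
  have := hX.t35Space
  have := hY.t35Space
  obtain ⟨H, hH⟩ := exists_carriesSupport hT hT'
  obtain ⟨h, hh⟩ := exists_homeomorph_stoneCechUnit_eq H
    (fun _ => hX.mem_range_stoneCechUnit fun _ => hH.not_forall_pos_of_eq_zero hE)
    (fun _ => hY.mem_range_stoneCechUnit fun _ => hH.symm.not_forall_pos_of_eq_zero hF)
  exact ⟨h, hH.exists_addEquiv hh⟩

theorem stmt4 {𝕂 X Y E F : Type} [RCLike 𝕂]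
    [TopologicalSpace X] [CompletelyRegularSpace X] [T2Space X]
    [TopologicalSpace Y] [CompletelyRegularSpace Y] [T2Space Y]
    [NormedAddCommGroup E] [NormedSpace 𝕂 E]
    [NormedAddCommGroup F] [NormedSpace 𝕂 F]
    (hE : ¬ FiniteDimensional 𝕂 E) (hF : ¬ FiniteDimensional 𝕂 F)
    (hX : Realcompact X) (hY : Realcompact Y)
    (T : (X →ᵇ E) ≃ₗ[𝕂] (Y →ᵇ F)) (hT : SeparatingB ⇑T) (hT' : SeparatingB ⇑T.symm) :
    ∃ (h : Y ≃ₜ X) (J : Y → (E ≃ₗ[𝕂] F)),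
      ∀ (f : X →ᵇ E) (y : Y), T f y = J y (f (h y)) := by
  obtain ⟨h, J, hJ⟩ := stmt4_general hE hF hX hY T.toAddEquiv hT hT'
  refine ⟨h, fun y => (J y).toLinearEquiv fun c e => ?_, hJ⟩
  have hsmul : T (const X (c • e)) y = c • T (const X e) y :=
    DFunLike.congr_fun (map_smul T c (const X e)) y
  exact (hJ (const X (c • e)) y).symm.trans (hsmul.trans (congrArg (c • ·) (hJ (const X e) y)))
end
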